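/- Let s ≥ 2, ϑ ≥ 0, and take the second-order RKC2 coefficients: ω0 = 1 + ϑ/s², ω1 = T_s′(ω0)/T_s″(ω0), b_j = T_j″(ω0)/T_j′(ω0)² for 2 ≤ j ≤ s, b_0 = b_1 = b_2, a_j = 1 − b_j T_j(ω0), with μ_j, ν_j, κ_j, γ_j the RKC coefficients, and set C_s = Σ_{j=1}^{s} (b_s/b_j) U_{s−j}(ω0) μ_j. Let f : ℝⁿ → ℝⁿ be twice continuously differentiable with ‖f″(x)‖ ≤ C_{f″} for all x. Let yⁿ, ŷⁿ ∈ ℝⁿ and Δt > 0, and assume the Jacobian matrix J of f at yⁿ is symmetric with all eigenvalues in [−ρ, 0], where Δt·ρ ≤ 2ω0/ω1. Define the exact RKC step d_j and y^{n+1} and the mixed-precision step d̂_j and ŷ^{n+1} as follows: d_0 = 0, d_1 = μ_1 Δt f(yⁿ), d_j = ν_j d_{j−1} + κ_j d_{j−2} + μ_j Δt f(yⁿ + d_{j−1}) + γ_j Δt f(yⁿ), y^{n+1} = yⁿ + d_s; d̂_0 = 0, d̂_1 = μ_1 Δt f(ŷⁿ), d̂_j = ν_j d̂_{j−1} + κ_j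 d̂_{j−2} + μ_j Δt (f(ŷⁿ) + Δ̂f_{j−1}) + γ_j Δt f(ŷⁿ), ŷ^{n+1} = ŷⁿ + d̂_s. Assume for all 1 ≤ j ≤ s−1: ‖Δ̂f_j − (f(ŷⁿ + d̂_j) − f(ŷⁿ))‖₂ ≤ min(Ĉ Δt², C_Δ ‖ŷⁿ‖₂), ‖d̂_j‖₂ ≤ C_d · min(Δt ‖f(ŷⁿ)‖₂, ‖ŷⁿ‖₂) and ‖d_j‖₂ ≤ C_d · min(Δt ‖f(yⁿ)‖₂, ‖yⁿ‖₂), for constants Ĉ, C_Δ, C_d ≥ 0. Then ‖ŷ^{n+1} − y^{n+1}‖₂ ≤ ‖ŷⁿ − yⁿ‖₂ + C_{f″}(1 + 2C_s) ‖ŷⁿ − yⁿ‖₂² Δt + C_s min(Ĉ Δt², C_Δ ‖ŷⁿ‖₂) Δt + C_s C_{f″} C_d² ( min(Δt ‖f(ŷⁿ)‖₂, ‖ŷⁿ‖₂)² + min(Δt ‖f(yⁿ)‖₂, ‖yⁿ‖₂)² ) Δt. -/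

import Mathlib

/-!
Subtracting the two recurrences, the increment of the error `e = ŷⁿ - yⁿ` is an RKC step for the
linear map `J`, perturbed at the start by `r = f(ŷⁿ) - f(yⁿ) - J e` and at the stages by
`g_j = f(ŷⁿ) + Δ̂f_j - f(yⁿ + d_j) - J(e + d̂_j - d_j)`. Scaling by `1 / b_j` turns it into the
three-term Chebyshev recurrence for `X = ω₀ + ω₁ Δt J`, and Duhamel's principle gives
`e + d̂_s - d_s = P(X) e + Δt ∑_j (b_s / b_j) μ_j U_{s-j}(X) h_j` with
`P = 1 - b_s T_s(ω₀) + b_s T_s`, `h_1 = r` and `h_j = g_{j-1} - a_{j-1} r`.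

The spectrum of `X` lies in `[-ω₀, ω₀]`, where `|T_k| ≤ T_k(ω₀)` and `|U_k| ≤ U_k(ω₀)`. Hence the
sum is bounded by `C_s Δt max ‖h_j‖`, and `P(X)` is a contraction as soon as `b_s T_s(ω₀) ≤ 1`. For
the second-order weights this is Laguerre's inequality `T_j T_j″ ≤ (T_j′)²`, valid because `T_j` has
only real roots. Taylor's formula bounds `r` and `g_j`.
-/

noncomputable section

/-- Chebyshev polynomial of the first kind, evaluated in an arbitrary ring. -/
def chebT (R : Type*) [Ring R] : ℕ → R → R
  | 0, _ => 1
  | 1, x => x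
  | n + 2, x => 2 * x * chebT R (n + 1) x - chebT R n x

/-- Chebyshev polynomial of the second kind, evaluated in an arbitrary ring. -/
def chebU (R : Type*) [Ring R] : ℕ → R → R
  | 0, _ => 1
  | 1, x => 2 * x
  | n + 2, x => 2 * x * chebU R (n + 1) x - chebU R n x

/-- Spectral norm of a real matrix: operator norm induced by the Euclidean norms. -/
def specNorm {m n : ℕ} (A : Matrix (Fin m) (Fin n) ℝ) : ℝ :=
  ‖(Matrix.toEuclideanLin A).toContinuousLinearMap‖

open Polynomial
open Polynomial.Chebyshev hiding C S
open scoped RealInnerProductSpace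

theorem eval_mul_eval_derivative_derivative_le_sq_of_splits {K : Type*} [Field K] [LinearOrder K]
    [IsStrictOrderedRing K] {p : K[X]} (hp : p.Splits) (x : K) :
    p.eval x * (derivative (derivative p)).eval x ≤ (derivative p).eval x ^ 2 := by
  obtain ⟨roots, hroots⟩ := splits_iff_exists_multiset.mp hp
  rw [hroots]
  clear hroots
  generalize p.leadingCoeff = c
  induction roots using Multiset.induction_on with
  | empty => simp
  | cons r roots ih =>
    rw [Multiset.map_cons, Multiset.prod_cons, mul_left_comm]
    generalize C c * (roots.map fun a => X - C a).prod = q at ih ⊢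
    -- `p = (X - r) q` gives `p'² - p p'' = q² + (x - r)² (q'² - q q'')`.
    have hq := mul_nonneg (sq_nonneg (x - r)) (sub_nonneg.mpr ih)
    simp only [derivative_mul, derivative_add, derivative_X_sub_C, one_mul, eval_add, eval_mul,
      eval_sub, eval_X, eval_C]
    linarith [sq_nonneg (q.eval x)]

theorem chebyshev_T_real_splits (k : ℕ) : (T ℝ k).Splits := by
  have hinj := (Finset.range k).nodup_map_iff_injOn.mp (roots_T_real_nodup k)
  rw [splits_iff_card_roots, roots_T_real, Finset.card_val, Finset.card_image_of_injOn hinj,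
    Finset.card_range, natDegree_T, Int.natAbs_natCast]

theorem eq_zero_or_one_le_eval_of_mem_span_T {x : ℝ} (hx : 1 ≤ x) {s : Set ℕ} {p : ℝ[X]}
    (hp : p ∈ Submodule.span ℕ ((fun m : ℕ => T ℝ m) '' s)) : p = 0 ∨ 1 ≤ p.eval x := by
  induction hp using Submodule.span_induction with
  | mem p hp =>
    obtain ⟨m, -, rfl⟩ := hp
    exact .inr (one_le_eval_T_real m hx)
  | zero => exact .inl rfl
  | add p q _ _ hp hq =>
    rcases hp with rfl | hp
    · rwa [zero_add]
    · refine .inr ?_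
      rcases hq with rfl | hq
      · rwa [add_zero]
      · rw [eval_add]
        linarith
  | smul n p _ hp =>
    rcases Nat.eq_zero_or_pos n with rfl | hn
    · exact .inl (zero_smul _ _)
    · refine hp.imp (fun hp => by rw [hp, smul_zero]) fun hp => ?_
      rw [eval_smul, nsmul_eq_mul]
      exact one_le_mul_of_one_le_of_one_le (mod_cast hn) hp

theorem iterate_derivative_ne_zero_of_le_natDegree {R : Type*} [Semiring R] [IsAddTorsionFree R]
    {p : R[X]} (hp : p ≠ 0) {j : ℕ} (hj : j ≤ p.natDegree) : derivative^[j] p ≠ 0 := by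
  intro h
  have hcoeff := congrArg (coeff · (p.natDegree - j)) h
  simp only [coeff_iterate_derivative, Nat.sub_add_cancel hj, coeff_zero, coeff_natDegree] at hcoeff
  rcases smul_eq_zero.mp hcoeff with hfac | hlead
  · exact hj.not_gt (Nat.descFactorial_eq_zero_iff_lt.mp hfac)
  · exact hp (leadingCoeff_eq_zero.mp hlead)

theorem one_le_eval_iterate_derivative_T {x : ℝ} (hx : 1 ≤ x) {j k : ℕ} (hjk : j ≤ k) :
    1 ≤ (derivative^[j] (T ℝ k)).eval x :=
  (eq_zero_or_one_le_eval_of_mem_span_T hx (T_iterate_derivative_mem_span_T k j)).resolve_left <|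
    iterate_derivative_ne_zero_of_le_natDegree (T_ne_zero ℝ k) <| by
      rwa [natDegree_T, Int.natAbs_natCast]

theorem abs_eval_T_le_eval_T {x y : ℝ} (hy : 1 ≤ y) (hxy : |x| ≤ y) (k : ℕ) :
    |(T ℝ k).eval x| ≤ (T ℝ k).eval y := by
  rcases le_total |x| 1 with hx | hx
  · exact (abs_eval_T_real_le_one k hx).trans (one_le_eval_T_real k hy)
  wlog hx0 : 0 ≤ x generalizing x
  · simpa only [T_eval_neg, abs_mul, abs_unit_intCast, one_mul] using
      this (x := -x) (by rwa [abs_neg]) (by rwa [abs_neg]) (by linarith)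
  rw [abs_of_nonneg hx0] at hx hxy
  rw [← Real.cosh_arcosh hx, ← Real.cosh_arcosh hy, Real.cosh_le_cosh] at hxy
  rw [← Real.cosh_arcosh hx, ← Real.cosh_arcosh hy, T_real_cosh, T_real_cosh,
    abs_of_pos (Real.cosh_pos _), Real.cosh_le_cosh, abs_mul, abs_mul]
  gcongr

theorem abs_eval_le_eval_of_mem_span_T {x y : ℝ} (hy : 1 ≤ y) (hxy : |x| ≤ y) {s : Set ℕ}
    {p : ℝ[X]} (hp : p ∈ Submodule.span ℕ ((fun m : ℕ => T ℝ m) '' s)) :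
    |p.eval x| ≤ p.eval y := by
  induction hp using Submodule.span_induction with
  | mem p hp =>
    obtain ⟨m, -, rfl⟩ := hp
    exact abs_eval_T_le_eval_T hy hxy m
  | zero => rw [eval_zero, eval_zero, abs_zero]
  | add p q _ _ hp hq =>
    rw [eval_add, eval_add]
    exact (abs_add_le _ _).trans (add_le_add hp hq)
  | smul n p _ hp =>
    rw [eval_smul, eval_smul, abs_nsmul]
    exact nsmul_le_nsmul_right hp n

theorem abs_eval_U_le_eval_U {x y : ℝ} (hy : 1 ≤ y) (hxy : |x| ≤ y) (k : ℕ) :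
    |(U ℝ k).eval x| ≤ (U ℝ k).eval y :=
  abs_eval_le_eval_of_mem_span_T hy hxy (U_mem_span_T ℝ k)

theorem chebT_eq_eval {R : Type*} [CommRing R] (k : ℕ) (x : R) :
    chebT R k x = (T R k).eval x := by
  induction k using Nat.twoStepInduction with
  | zero => simp [chebT]
  | one => simp [chebT]
  | more k ih₀ ih₁ =>
    push_cast at ih₁ ⊢
    simp [chebT, ih₀, ih₁, T_add_two]

theorem chebU_eq_eval {R : Type*} [CommRing R] (k : ℕ) (x : R) :
    chebU R k x = (U R k).eval x := by
  induction k using Nat.twoStepInduction with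
  | zero => simp [chebU]
  | one => simp [chebU]
  | more k ih₀ ih₁ =>
    push_cast at ih₁ ⊢
    simp [chebU, ih₀, ih₁, U_add_two]

theorem deriv_chebT (k : ℕ) (x : ℝ) :
    deriv (fun x => chebT ℝ k x) x = (derivative (T ℝ k)).eval x := by
  simp only [chebT_eq_eval, Polynomial.deriv]

theorem deriv_deriv_chebT (k : ℕ) (x : ℝ) :
    deriv (deriv (fun x => chebT ℝ k x)) x = (derivative (derivative (T ℝ k))).eval x := by
  simp only [funext (deriv_chebT k), Polynomial.deriv]

section SymmetricOperator

variable {E : Type*} [NormedAddCommGroup E] [InnerProductSpace ℝ E]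

section Eigenbasis

variable {ι : Type*} [Fintype ι] (u : OrthonormalBasis ι ℝ E) {A : E →ₗ[ℝ] E} {a : ι → ℝ}

theorem repr_apply_eq_mul_repr_of_eigenvectors (hA : ∀ i, A (u i) = a i • u i) (v : E) (i : ι) :
    u.repr (A v) i = a i * u.repr v i := by
  classical
  conv_lhs => rw [← u.sum_repr v]
  simp [hA, Pi.single_apply, mul_comm]

theorem norm_apply_le_of_eigenvectors (hA : ∀ i, A (u i) = a i • u i) {c : ℝ} (hc : 0 ≤ c)
    (ha : ∀ i, |a i| ≤ c) (v : E) : ‖A v‖ ≤ c * ‖v‖ := by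
  rw [← u.repr.norm_map (A v), ← u.repr.norm_map v]
  refine le_of_sq_le_sq ?_ (by positivity)
  rw [mul_pow, EuclideanSpace.norm_sq_eq, EuclideanSpace.norm_sq_eq, Finset.mul_sum]
  refine Finset.sum_le_sum fun i _ => ?_
  rw [repr_apply_eq_mul_repr_of_eigenvectors u hA, norm_mul, mul_pow, Real.norm_eq_abs]
  gcongr
  exact ha i

theorem inner_apply_self_mem_Icc_of_eigenvectors (hA : ∀ i, A (u i) = a i • u i) {l r : ℝ}
    (ha : ∀ i, a i ∈ Set.Icc l r) (v : E) :
    ⟪A v, v⟫ ∈ Set.Icc (l * ‖v‖ ^ 2) (r * ‖v‖ ^ 2) := by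
  have hinner : ⟪A v, v⟫ = ∑ i, a i * u.repr v i ^ 2 := by
    rw [← u.repr.inner_map_map, PiLp.inner_apply]
    refine Finset.sum_congr rfl fun i _ => ?_
    rw [repr_apply_eq_mul_repr_of_eigenvectors u hA, RCLike.inner_apply, conj_trivial]
    ring
  have hnorm : ‖v‖ ^ 2 = ∑ i, u.repr v i ^ 2 := by
    rw [← u.repr.norm_map, EuclideanSpace.real_norm_sq_eq]
  rw [hinner, hnorm, Finset.mul_sum, Finset.mul_sum]
  constructor <;> refine Finset.sum_le_sum fun i _ => ?_ <;> gcongr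
  exacts [(ha i).1, (ha i).2]

end Eigenbasis

theorem norm_aeval_apply_le_of_finiteDimensional [FiniteDimensional ℝ E] {X : E →ₗ[ℝ] E}
    (hX : X.IsSymmetric) {l r c : ℝ}
    (hlr : ∀ v, ⟪X v, v⟫ ∈ Set.Icc (l * ‖v‖ ^ 2) (r * ‖v‖ ^ 2)) (hc : 0 ≤ c) {p : ℝ[X]}
    (hp : ∀ x ∈ Set.Icc l r, |p.eval x| ≤ c) (v : E) : ‖aeval X p v‖ ≤ c * ‖v‖ := by
  refine norm_apply_le_of_eigenvectors (hX.eigenvectorBasis rfl)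
    (fun i => Module.End.aeval_apply_of_hasEigenvector
      (hX.hasEigenvector_eigenvectorBasis rfl i)) hc (fun i => hp _ ?_) v
  have h := hlr (hX.eigenvectorBasis rfl i)
  rwa [hX.apply_eigenvectorBasis, real_inner_smul_left, real_inner_self_eq_norm_sq,
    OrthonormalBasis.norm_eq_one, one_pow, mul_one, mul_one, mul_one] at h

theorem aeval_compression_apply (X : E →ₗ[ℝ] E) (K : Submodule ℝ E) [K.HasOrthogonalProjection]
    (p : ℝ[X]) (v : K) (hv : ∀ i ≤ p.natDegree, (X ^ i) v ∈ K) :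
    (aeval (K.orthogonalProjectionOnto.toLinearMap ∘ₗ X ∘ₗ K.subtype) p v : E) = aeval X p v := by
  set Y := K.orthogonalProjectionOnto.toLinearMap ∘ₗ X ∘ₗ K.subtype
  have hpow (i : ℕ) (hi : i ≤ p.natDegree) : ((Y ^ i) v : E) = (X ^ i) v := by
    induction i with
    | zero => rfl
    | succ i ih =>
      have hmem := hv (i + 1) hi
      rw [pow_succ', Module.End.mul_apply] at hmem
      rw [pow_succ', pow_succ', Module.End.mul_apply, Module.End.mul_apply, LinearMap.comp_apply,
        LinearMap.comp_apply, Submodule.subtype_apply, ih (by lia)]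
      exact congrArg Subtype.val (K.orthogonalProjectionOnto_mem_subspace_eq_self ⟨_, hmem⟩)
  simp only [aeval_eq_sum_range, LinearMap.sum_apply, LinearMap.smul_apply,
    Submodule.coe_sum, Submodule.coe_smul]
  refine Finset.sum_congr rfl fun i hi => ?_
  rw [hpow i (Finset.mem_range_succ_iff.mp hi)]

theorem norm_aeval_apply_le {X : E →ₗ[ℝ] E} (hX : X.IsSymmetric) {l r c : ℝ}
    (hlr : ∀ v, ⟪X v, v⟫ ∈ Set.Icc (l * ‖v‖ ^ 2) (r * ‖v‖ ^ 2)) (hc : 0 ≤ c) {p : ℝ[X]}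
    (hp : ∀ x ∈ Set.Icc l r, |p.eval x| ≤ c) (v : E) : ‖aeval X p v‖ ≤ c * ‖v‖ := by
  -- `aeval X p v` only involves `v, X v, …, X ^ deg p v`, so `X` may be replaced by its
  -- compression to the Krylov space these vectors span, which inherits the two hypotheses.
  let K := Submodule.span ℝ (Set.range fun i : Fin (p.natDegree + 1) => (X ^ (i : ℕ)) v)
  have : FiniteDimensional ℝ K := .span_of_finite ℝ (Set.finite_range _)
  have hmem (i : ℕ) (hi : i ≤ p.natDegree) : (X ^ i) v ∈ K :=
    Submodule.subset_span ⟨⟨i, Nat.lt_succ_of_le hi⟩, rfl⟩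
  have hinner (w z : K) :
      ⟪(K.orthogonalProjectionOnto.toLinearMap ∘ₗ X ∘ₗ K.subtype) w, z⟫ = ⟪X w, (z : E)⟫ :=
    K.inner_orthogonalProjectionOnto_eq_of_mem_right z (X w)
  have hsymm : (K.orthogonalProjectionOnto.toLinearMap ∘ₗ X ∘ₗ K.subtype).IsSymmetric :=
    fun w z => by rw [hinner, hX, real_inner_comm, ← hinner, real_inner_comm]
  have hbound := norm_aeval_apply_le_of_finiteDimensional hsymm
    (fun w => by rw [hinner]; exact hlr w) hc hp ⟨v, hmem 0 (Nat.zero_le _)⟩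
  rwa [← K.norm_coe, ← K.norm_coe, aeval_compression_apply X K p _ hmem] at hbound

end SymmetricOperator

section Taylor

variable {E F : Type*} [NormedAddCommGroup E] [NormedSpace ℝ E] [NormedAddCommGroup F]
  [NormedSpace ℝ F] {f : E → F} {C : ℝ}

theorem norm_taylor_remainder_le_of_norm_hasFDerivAt_sub_le {f' : E → E →L[ℝ] F}
    (hf : ∀ x, HasFDerivAt f (f' x) x) {x : E} (hlip : ∀ w, ‖f' (x + w) - f' x‖ ≤ C * ‖w‖)
    (v : E) : ‖f (x + v) - f x - f' x v‖ ≤ C / 2 * ‖v‖ ^ 2 := by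
  have hline (t : ℝ) : HasDerivAt (fun t : ℝ => x + t • v) v t := by
    simpa only [id, one_smul] using ((hasDerivAt_id t).smul_const v).const_add x
  have hremainder (t : ℝ) : HasDerivAt (fun t : ℝ => f (x + t • v) - f x - t • f' x v)
      ((f' (x + t • v) - f' x) v) t := by
    have hlinear := (hasDerivAt_id t).smul_const (f' x v)
    rw [one_smul] at hlinear
    exact (((hf _).comp_hasDerivAt t (hline t)).sub_const (f x)).sub hlinear
  have hbound (t : ℝ) :
      HasDerivAt (fun t : ℝ => C / 2 * ‖v‖ ^ 2 * t ^ 2) (C * ‖v‖ ^ 2 * t) t :=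
    ((hasDerivAt_pow 2 t).const_mul (C / 2 * ‖v‖ ^ 2)).congr_deriv (by norm_num; ring)
  have hderiv_le (t : ℝ) (ht : 0 ≤ t) : ‖(f' (x + t • v) - f' x) v‖ ≤ C * ‖v‖ ^ 2 * t :=
    calc
      _ ≤ ‖f' (x + t • v) - f' x‖ * ‖v‖ := ContinuousLinearMap.le_opNorm _ _
      _ ≤ C * ‖t • v‖ * ‖v‖ := by gcongr; exact hlip _
      _ = C * ‖v‖ ^ 2 * t := by rw [norm_smul, Real.norm_of_nonneg ht]; ring
  have h := image_norm_le_of_norm_deriv_right_le_deriv_boundary (a := 0) (b := 1)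
    (fun t _ => (hremainder t).continuousAt.continuousWithinAt)
    (fun t _ => (hremainder t).hasDerivWithinAt) (by simp) hbound (fun t ht => hderiv_le t ht.1)
    (Set.right_mem_Icc.2 zero_le_one)
  simpa only [one_smul, one_pow, mul_one] using h

theorem norm_fderiv_add_sub_fderiv_le (hf : ContDiff ℝ 2 f)
    (hC : ∀ x, ‖iteratedFDeriv ℝ 2 f x‖ ≤ C) (x w : E) :
    ‖fderiv ℝ f (x + w) - fderiv ℝ f x‖ ≤ C * ‖w‖ := by
  have hdiff : Differentiable ℝ (fderiv ℝ f) :=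
    (hf.fderiv_right (m := 1) (by norm_num)).differentiable one_ne_zero
  have hbound (z : E) : ‖fderiv ℝ (fderiv ℝ f) z‖ ≤ C := by
    rw [← norm_iteratedFDeriv_one, norm_iteratedFDeriv_fderiv]
    exact hC z
  simpa only [add_sub_cancel_left] using
    convex_univ.norm_image_sub_le_of_norm_fderiv_le (𝕜 := ℝ) (fun z _ => hdiff z)
      (fun z _ => hbound z) (Set.mem_univ x) (Set.mem_univ (x + w))

theorem norm_taylor_remainder_le_of_norm_iteratedFDeriv_two_le (hf : ContDiff ℝ 2 f)
    (hC : ∀ x, ‖iteratedFDeriv ℝ 2 f x‖ ≤ C) {x : E} {f' : E →L[ℝ] F} (hf' : HasFDerivAt f f' x)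
    (v : E) : ‖f (x + v) - f x - f' v‖ ≤ C / 2 * ‖v‖ ^ 2 := by
  rw [← hf'.fderiv]
  exact norm_taylor_remainder_le_of_norm_hasFDerivAt_sub_le
    (fun z => (hf.differentiable two_ne_zero z).hasFDerivAt)
    (norm_fderiv_add_sub_fderiv_le hf hC x) v

theorem norm_perturbed_linearization_defect_le {A : E →L[ℝ] F} {y : E} (hC : 0 ≤ C)
    (hf : ∀ v, ‖f (y + v) - f y - A v‖ ≤ C / 2 * ‖v‖ ^ 2) {y' d d' : E} {δ : F} {m p q : ℝ}
    (hδ : ‖δ - (f (y' + d') - f y')‖ ≤ m) (hp : ‖d'‖ ≤ p) (hq : ‖d‖ ≤ q) :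
    ‖f y' + δ - f (y + d) - A (y' - y + (d' - d))‖ ≤
      C * ‖y' - y‖ ^ 2 + m + C * (p ^ 2 + q ^ 2) := by
  have hsplit : f y' + δ - f (y + d) - A (y' - y + (d' - d)) =
      (δ - (f (y' + d') - f y')) + (f (y + (y' - y + d')) - f y - A (y' - y + d'))
        - (f (y + d) - f y - A d) := by
    have : y + (y' - y + d') = y' + d' := by abel
    rw [this]
    simp only [map_add, map_sub]
    abel
  have hsq : ‖y' - y + d'‖ ^ 2 ≤ 2 * (‖y' - y‖ ^ 2 + p ^ 2) := by
    have : ‖y' - y + d'‖ ^ 2 ≤ (‖y' - y‖ + p) ^ 2 := by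
      gcongr
      exact norm_add_le_of_le le_rfl hp
    exact this.trans add_sq_le
  rw [hsplit]
  calc
    _ ≤ m + C / 2 * ‖y' - y + d'‖ ^ 2 + C / 2 * ‖d‖ ^ 2 :=
      norm_sub_le_of_le (norm_add_le_of_le hδ (hf _)) (hf _)
    _ ≤ m + C / 2 * (2 * (‖y' - y‖ ^ 2 + p ^ 2)) + C / 2 * q ^ 2 := by gcongr
    _ ≤ _ := by linarith [mul_nonneg hC (sq_nonneg q)]

end Taylor

section Coefficients

/-- The relations expressing the coefficients `μ_j, ν_j, κ_j, γ_j` of an `s`-stage RKC scheme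
through the parameters `ω₀, ω₁` and the weights `b_j`, for the first- and second-order schemes
alike. Entries with index larger than `s` are unconstrained. -/
structure IsRKCCoeff (s : ℕ) (ω0 ω1 : ℝ) (b μ ν κ γ : ℕ → ℝ) : Prop where
  mu_one : μ 1 = b 1 * ω1
  mu_eq : ∀ j, 2 ≤ j → j ≤ s → μ j = 2 * ω1 * b j / b (j - 1)
  nu_eq : ∀ j, 2 ≤ j → j ≤ s → ν j = 2 * ω0 * b j / b (j - 1)
  kappa_eq : ∀ j, 2 ≤ j → j ≤ s → κ j = -(b j / b (j - 2))
  gamma_eq : ∀ j, 2 ≤ j → j ≤ s → γ j = -(μ j * (1 - b (j - 1) * chebT ℝ (j - 1) ω0))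

/-- Stability of RKC weights: they are positive and satisfy `b_j T_j(ω₀) ≤ 1`, so that the internal
stability polynomials `1 - b_j T_j(ω₀) + b_j T_j` take values in `[-1, 1]` on `[-ω₀, ω₀]`. -/
structure IsStableRKCWeight (s : ℕ) (ω0 : ℝ) (b : ℕ → ℝ) : Prop where
  one_le : 1 ≤ ω0
  pos : ∀ j ≤ s, 0 < b j
  mul_chebT_le_one : ∀ j ≤ s, b j * chebT ℝ j ω0 ≤ 1

/-- The constant `C_s` through which the local errors of an RKC step enter the propagated error. -/
def rkcErrorConst (s : ℕ) (ω0 : ℝ) (b μ : ℕ → ℝ) : ℝ :=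
  ∑ j ∈ Finset.Icc 1 s, b s / b j * chebU ℝ (s - j) ω0 * μ j

variable {s : ℕ} {ω0 ω1 : ℝ} {b μ ν κ γ : ℕ → ℝ}

theorem chebT_nonneg (hω0 : 1 ≤ ω0) (k : ℕ) : 0 ≤ chebT ℝ k ω0 :=
  chebT_eq_eval k ω0 ▸ zero_le_one.trans (one_le_eval_T_real k hω0)

theorem chebU_nonneg (hω0 : 1 ≤ ω0) (k : ℕ) : 0 ≤ chebU ℝ k ω0 := by
  rw [chebU_eq_eval]
  exact (abs_nonneg _).trans
    (abs_eval_U_le_eval_U hω0 (abs_of_nonneg (zero_le_one.trans hω0)).le k)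

theorem deriv_chebT_pos (hω0 : 1 ≤ ω0) {k : ℕ} (hk : 1 ≤ k) :
    0 < deriv (fun x => chebT ℝ k x) ω0 :=
  deriv_chebT k ω0 ▸ zero_lt_one.trans_le (one_le_eval_iterate_derivative_T hω0 hk)

theorem deriv_deriv_chebT_pos (hω0 : 1 ≤ ω0) {k : ℕ} (hk : 2 ≤ k) :
    0 < deriv (deriv (fun x => chebT ℝ k x)) ω0 :=
  deriv_deriv_chebT k ω0 ▸ zero_lt_one.trans_le (one_le_eval_iterate_derivative_T hω0 hk)

theorem rkc2_weight_mul_chebT_le_one (k : ℕ) (x : ℝ) :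
    deriv (deriv (fun x => chebT ℝ k x)) x / deriv (fun x => chebT ℝ k x) x ^ 2
      * chebT ℝ k x ≤ 1 := by
  rw [deriv_deriv_chebT, deriv_chebT, chebT_eq_eval, div_mul_eq_mul_div, mul_comm]
  exact div_le_one_of_le₀
    (eval_mul_eval_derivative_derivative_le_sq_of_splits (chebyshev_T_real_splits k) x)
    (sq_nonneg _)

theorem isStableRKCWeight_rkc2 (hω0 : 1 ≤ ω0) (hs : 2 ≤ s)
    (hb : ∀ j, 2 ≤ j → j ≤ s →
      b j = deriv (deriv (fun x => chebT ℝ j x)) ω0 / deriv (fun x => chebT ℝ j x) ω0 ^ 2)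
    (hb0 : b 0 = b 2) (hb1 : b 1 = b 2) : IsStableRKCWeight s ω0 b := by
  have hpos (j : ℕ) (hj2 : 2 ≤ j) (hj : j ≤ s) : 0 < b j := by
    rw [hb j hj2 hj]
    exact div_pos (deriv_deriv_chebT_pos hω0 hj2) (pow_pos (deriv_chebT_pos hω0 (by lia)) 2)
  have hbT (j : ℕ) (hj2 : 2 ≤ j) (hj : j ≤ s) : b j * chebT ℝ j ω0 ≤ 1 := by
    rw [hb j hj2 hj]
    exact rkc2_weight_mul_chebT_le_one j ω0
  have hT2 : 1 ≤ chebT ℝ 2 ω0 ∧ ω0 ≤ chebT ℝ 2 ω0 := by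
    simp only [chebT]
    constructor <;> nlinarith
  have hb2 := (hpos 2 le_rfl hs).le
  refine ⟨hω0, fun j hj => ?_, fun j hj => ?_⟩
  · match j with
    | 0 => exact hb0 ▸ hpos 2 le_rfl hs
    | 1 => exact hb1 ▸ hpos 2 le_rfl hs
    | j + 2 => exact hpos (j + 2) (by lia) hj
  · match j with
    | 0 => exact hb0 ▸ (mul_le_mul_of_nonneg_left hT2.1 hb2).trans (hbT 2 le_rfl hs)
    | 1 => exact hb1 ▸ (mul_le_mul_of_nonneg_left hT2.2 hb2).trans (hbT 2 le_rfl hs)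
    | j + 2 => exact hbT (j + 2) (by lia) hj

theorem IsRKCCoeff.mu_pos (hc : IsRKCCoeff s ω0 ω1 b μ ν κ γ) (hω1 : 0 < ω1)
    (hb : ∀ j ≤ s, 0 < b j) {j : ℕ} (hj1 : 1 ≤ j) (hj : j ≤ s) : 0 < μ j := by
  have hbj := hb j hj
  rcases hj1.eq_or_lt with rfl | hj2
  · rw [hc.mu_one]
    positivity
  · have := hb (j - 1) (by lia)
    rw [hc.mu_eq j hj2 hj]
    positivity

theorem rkcErrorConst_nonneg (hω0 : 1 ≤ ω0) (hb : ∀ j ≤ s, 0 < b j)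
    (hμ : ∀ j, 1 ≤ j → j ≤ s → 0 < μ j) : 0 ≤ rkcErrorConst s ω0 b μ := by
  refine Finset.sum_nonneg fun j hj => ?_
  obtain ⟨hj1, hj⟩ := Finset.mem_Icc.mp hj
  have hbs := hb s le_rfl
  have hbj := hb j hj
  have hμj := hμ j hj1 hj
  have hU := chebU_nonneg hω0 (s - j)
  positivity

end Coefficients

section Stages

variable {E : Type*} [AddCommGroup E] [Module ℝ E]

/-- `d` is the sequence of increments of an `s`-stage RKC step of size `τ` whose right-hand side
takes the value `F₀` at the start of the step and `F j` at stage `j`. -/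
structure IsRKCStages (s : ℕ) (μ ν κ γ : ℕ → ℝ) (τ : ℝ) (F₀ : E) (F d : ℕ → E) : Prop where
  zero : d 0 = 0
  one : d 1 = (μ 1 * τ) • F₀
  step : ∀ j, 2 ≤ j → j ≤ s →
    d j = ν j • d (j - 1) + κ j • d (j - 2) + (μ j * τ) • F (j - 1) + (γ j * τ) • F₀

/-- The operator `ω₀ + ω₁ τ A` at which the Chebyshev polynomials of an RKC step of size `τ` are
evaluated when the right-hand side is the linear map `A`. -/
def rkcShift (ω0 ω1 τ : ℝ) (A : E →ₗ[ℝ] E) : E →ₗ[ℝ] E :=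
  ω0 • 1 + (ω1 * τ) • A

/-- The inhomogeneity of the three-term Chebyshev recurrence that results from perturbing a linear
right-hand side by `r` at the start of the step and by `g j` at stage `j`. The coefficient of `r`
is `-a_{j-1}`, and the value at `0` is never used. -/
def rkcForcing (b : ℕ → ℝ) (ω0 : ℝ) (r : E) (g : ℕ → E) : ℕ → E
  | 0 => 0
  | 1 => r
  | j + 2 => g (j + 1) - (1 - b (j + 1) * chebT ℝ (j + 1) ω0) • r

variable {s : ℕ} {ω0 ω1 τ : ℝ} {b μ ν κ γ : ℕ → ℝ} {F₀ F₀' : E} {F F' d d' : ℕ → E}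

theorem IsRKCStages.sub (hd : IsRKCStages s μ ν κ γ τ F₀ F d)
    (hd' : IsRKCStages s μ ν κ γ τ F₀' F' d') :
    IsRKCStages s μ ν κ γ τ (F₀ - F₀') (fun j => F j - F' j) (fun j => d j - d' j) where
  zero := by rw [hd.zero, hd'.zero, sub_zero]
  one := by rw [hd.one, hd'.one, smul_sub]
  step j hj2 hj := by
    rw [hd.step j hj2 hj, hd'.step j hj2 hj]
    module

theorem rkcShift_apply (A : E →ₗ[ℝ] E) (v : E) :
    rkcShift ω0 ω1 τ A v = ω0 • v + (ω1 * τ) • A v := rfl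

theorem aeval_T_add_two_apply (X : E →ₗ[ℝ] E) (k : ℕ) (v : E) :
    aeval X (T ℝ (k + 2 : ℕ)) v =
      (2 : ℝ) • X (aeval X (T ℝ (k + 1 : ℕ)) v) - aeval X (T ℝ k) v := by
  push_cast
  simp [T_add_two, two_smul, two_mul]

theorem aeval_U_add_two_apply (X : E →ₗ[ℝ] E) (k : ℕ) (v : E) :
    aeval X (U ℝ (k + 2 : ℕ)) v =
      (2 : ℝ) • X (aeval X (U ℝ (k + 1 : ℕ)) v) - aeval X (U ℝ k) v := by
  push_cast
  simp [U_add_two, two_smul, two_mul]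

theorem eq_sum_aeval_U_apply_of_recurrence (X : E →ₗ[ℝ] E) {M c : ℕ → E} (h0 : M 0 = 0)
    (h1 : M 1 = c 1)
    (hM : ∀ j, j + 2 ≤ s → M (j + 2) = (2 : ℝ) • X (M (j + 1)) - M j + c (j + 2))
    {k : ℕ} (hk : k ≤ s) :
    M k = ∑ j ∈ Finset.Icc 1 k, aeval X (U ℝ (k - j : ℕ)) (c j) := by
  induction k using Nat.twoStepInduction with
  | zero => simpa using h0
  | one => simpa using h1
  | more k ih₀ ih₁ =>
    have hstep : ∑ j ∈ Finset.Icc 1 k, aeval X (U ℝ (k + 2 - j : ℕ)) (c j) =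
        ∑ j ∈ Finset.Icc 1 k, ((2 : ℝ) • X (aeval X (U ℝ (k + 1 - j : ℕ)) (c j)) -
          aeval X (U ℝ (k - j : ℕ)) (c j)) := by
      refine Finset.sum_congr rfl fun j hj => ?_
      have hjk := (Finset.mem_Icc.mp hj).2
      rw [Nat.sub_add_comm hjk, Nat.sub_add_comm hjk, aeval_U_add_two_apply]
    have hone : k + 2 - (k + 1) = 1 := by lia
    rw [hM k hk, ih₀ (by lia), ih₁ (by lia), Finset.sum_Icc_succ_top (by lia),
      Finset.sum_Icc_succ_top (by lia), Finset.sum_Icc_succ_top (by lia), hstep,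
      Finset.sum_sub_distrib, ← Finset.smul_sum, ← map_sum, hone]
    simp only [tsub_self, Nat.cast_zero, Nat.cast_one, U_zero, U_one, two_mul, two_smul, map_one,
      map_add, map_sum, aeval_X, Module.End.one_apply, LinearMap.add_apply, smul_add]
    abel

theorem IsRKCStages.eq_smul_add_sum (hc : IsRKCCoeff s ω0 ω1 b μ ν κ γ) (hs : 1 ≤ s)
    (hb : ∀ j ≤ s, b j ≠ 0) {A : E →ₗ[ℝ] E} {e r : E} {g : ℕ → E}
    (hd : IsRKCStages s μ ν κ γ τ (A e + r) (fun j => A (e + d j) + g j) d) :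
    d s = b s • (aeval (rkcShift ω0 ω1 τ A) (T ℝ s) e - chebT ℝ s ω0 • e) +
      ∑ j ∈ Finset.Icc 1 s, (b s / b j * μ j * τ) •
        aeval (rkcShift ω0 ω1 τ A) (U ℝ (s - j : ℕ)) (rkcForcing b ω0 r g j) := by
  set X := rkcShift ω0 ω1 τ A with hX
  have hsol := eq_sum_aeval_U_apply_of_recurrence X (s := s)
    (M := fun j => (b j)⁻¹ • d j - (aeval X (T ℝ j) e - chebT ℝ j ω0 • e))
    (c := fun j => (μ j * τ / b j) • rkcForcing b ω0 r g j) (by simp [hd.zero, chebT]) ?_ ?_ le_rfl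
  · have hbs := hb s le_rfl
    rw [sub_eq_iff_eq_add'] at hsol
    rw [← smul_inv_smul₀ hbs (d s), hsol, smul_add, Finset.smul_sum]
    congr! 2 with j
    rw [map_smul, smul_smul]
    congr 1
    ring
  · have hb1 := hb 1 hs
    simp only [chebT, hd.one, hc.mu_one, Nat.cast_one, T_one, aeval_X, hX, rkcShift_apply,
      rkcForcing]
    match_scalars <;> field_simp <;> simp
  · intro j hj
    have hb0 := hb j (by lia)
    have hb1 := hb (j + 1) (by lia)
    have hb2 := hb (j + 2) (by lia)
    have hj2 : 2 ≤ j + 2 := by lia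
    rw [aeval_T_add_two_apply, hd.step _ hj2 hj, hc.gamma_eq _ hj2 hj, hc.mu_eq _ hj2 hj,
      hc.nu_eq _ hj2 hj, hc.kappa_eq _ hj2 hj, chebT, rkcForcing]
    simp only [Nat.add_sub_cancel, Nat.add_succ_sub_one, map_add, map_sub, map_smul, hX,
      rkcShift_apply]
    match_scalars <;> field_simp
    ring

end Stages

section StabilityBounds

variable {E : Type*} [NormedAddCommGroup E] [InnerProductSpace ℝ E] {s : ℕ} {ω0 ω1 τ ρ : ℝ}
  {b μ ν κ γ : ℕ → ℝ} {A X : E →ₗ[ℝ] E}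

theorem isSymmetric_rkcShift (hA : A.IsSymmetric) : (rkcShift ω0 ω1 τ A).IsSymmetric :=
  (LinearMap.IsSymmetric.one.smul (conj_trivial ω0)).add (hA.smul (conj_trivial (ω1 * τ)))

theorem inner_rkcShift_apply_self_mem_Icc (hω1 : 0 < ω1) (hτ : 0 ≤ τ)
    (hA : ∀ v, ⟪A v, v⟫ ∈ Set.Icc (-ρ * ‖v‖ ^ 2) 0) (hτρ : τ * ρ ≤ 2 * ω0 / ω1) (v : E) :
    ⟪rkcShift ω0 ω1 τ A v, v⟫ ∈ Set.Icc (-ω0 * ‖v‖ ^ 2) (ω0 * ‖v‖ ^ 2) := by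
  obtain ⟨hl, hr⟩ := hA v
  have hωτ : 0 ≤ ω1 * τ := by positivity
  rw [le_div_iff₀ hω1] at hτρ
  rw [rkcShift_apply, inner_add_left, real_inner_smul_left, real_inner_smul_left,
    real_inner_self_eq_norm_sq]
  constructor
  · calc
      -ω0 * ‖v‖ ^ 2 ≤ ω0 * ‖v‖ ^ 2 - τ * ρ * ω1 * ‖v‖ ^ 2 := by
        linarith [mul_le_mul_of_nonneg_right hτρ (sq_nonneg ‖v‖)]
      _ = ω0 * ‖v‖ ^ 2 + ω1 * τ * (-ρ * ‖v‖ ^ 2) := by ring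
      _ ≤ _ := by gcongr
  · linarith [mul_nonpos_of_nonneg_of_nonpos hωτ hr]

theorem norm_aeval_U_apply_le (hω0 : 1 ≤ ω0) (hX : X.IsSymmetric)
    (hXω : ∀ v, ⟪X v, v⟫ ∈ Set.Icc (-ω0 * ‖v‖ ^ 2) (ω0 * ‖v‖ ^ 2)) (k : ℕ) (v : E) :
    ‖aeval X (U ℝ k) v‖ ≤ chebU ℝ k ω0 * ‖v‖ := by
  refine norm_aeval_apply_le hX hXω (chebU_nonneg hω0 k) (fun x hx => ?_) v
  rw [chebU_eq_eval]
  exact abs_eval_U_le_eval_U hω0 (abs_le.mpr hx) k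

theorem norm_add_smul_aeval_T_sub_apply_le (hω0 : 1 ≤ ω0) (hX : X.IsSymmetric)
    (hXω : ∀ v, ⟪X v, v⟫ ∈ Set.Icc (-ω0 * ‖v‖ ^ 2) (ω0 * ‖v‖ ^ 2)) {β : ℝ} (hβ : 0 ≤ β) {k : ℕ}
    (hβT : β * chebT ℝ k ω0 ≤ 1) (v : E) :
    ‖v + β • (aeval X (T ℝ k) v - chebT ℝ k ω0 • v)‖ ≤ ‖v‖ := by
  have hp : ∀ x ∈ Set.Icc (-ω0) ω0,
      |(1 + Polynomial.C β * (T ℝ k - Polynomial.C (chebT ℝ k ω0))).eval x| ≤ 1 := by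
    intro x hx
    have hT := abs_le.mp (abs_eval_T_le_eval_T hω0 (abs_le.mpr hx) k)
    rw [← chebT_eq_eval] at hT
    simp only [eval_add, eval_one, eval_mul, eval_C, eval_sub]
    rw [abs_le]
    constructor <;> nlinarith
  simpa [Algebra.algebraMap_eq_smul_one] using norm_aeval_apply_le hX hXω zero_le_one hp v

theorem norm_rkcForcing_le (hb : IsStableRKCWeight s ω0 b) {r : E} {g : ℕ → E} {G : ℝ}
    (hG : 0 ≤ G) (hg : ∀ j, 1 ≤ j → j ≤ s - 1 → ‖g j‖ ≤ G) {j : ℕ} (hj1 : 1 ≤ j) (hj : j ≤ s) :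
    ‖rkcForcing b ω0 r g j‖ ≤ G + ‖r‖ := by
  match j with
  | 1 => exact le_add_of_nonneg_left hG
  | j + 2 =>
    have hbT := hb.mul_chebT_le_one (j + 1) (by lia)
    have hbT' := mul_nonneg (hb.pos (j + 1) (by lia)).le (chebT_nonneg hb.one_le (j + 1))
    refine norm_sub_le_of_le (hg _ (by lia) (by lia)) ?_
    rw [norm_smul, Real.norm_of_nonneg (by linarith)]
    exact mul_le_of_le_one_left (norm_nonneg _) (by linarith)

theorem norm_sum_smul_aeval_U_apply_le (hω0 : 1 ≤ ω0) (hX : X.IsSymmetric)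
    (hXω : ∀ v, ⟪X v, v⟫ ∈ Set.Icc (-ω0 * ‖v‖ ^ 2) (ω0 * ‖v‖ ^ 2)) (hb : ∀ j ≤ s, 0 < b j)
    (hμ : ∀ j, 1 ≤ j → j ≤ s → 0 < μ j) (hτ : 0 ≤ τ) {h : ℕ → E} {B : ℝ}
    (hh : ∀ j, 1 ≤ j → j ≤ s → ‖h j‖ ≤ B) :
    ‖∑ j ∈ Finset.Icc 1 s, (b s / b j * μ j * τ) • aeval X (U ℝ (s - j : ℕ)) (h j)‖ ≤
      rkcErrorConst s ω0 b μ * B * τ := by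
  rw [rkcErrorConst, Finset.sum_mul, Finset.sum_mul]
  refine norm_sum_le_of_le _ fun j hj => ?_
  obtain ⟨hj1, hj⟩ := Finset.mem_Icc.mp hj
  have hbs := hb s le_rfl
  have hbj := hb j hj
  have hμj := hμ j hj1 hj
  have hU := chebU_nonneg hω0 (s - j)
  rw [norm_smul, Real.norm_of_nonneg (by positivity)]
  calc
    _ ≤ b s / b j * μ j * τ * (chebU ℝ (s - j) ω0 * ‖h j‖) := by
      gcongr
      exact norm_aeval_U_apply_le hω0 hX hXω _ _
    _ ≤ b s / b j * μ j * τ * (chebU ℝ (s - j) ω0 * B) := by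
      gcongr
      exact hh j hj1 hj
    _ = _ := by ring

theorem IsRKCStages.norm_add_le (hc : IsRKCCoeff s ω0 ω1 b μ ν κ γ)
    (hb : IsStableRKCWeight s ω0 b) (hs : 1 ≤ s) (hω1 : 0 < ω1) (hτ : 0 ≤ τ)
    (hA : A.IsSymmetric) (hAρ : ∀ v, ⟪A v, v⟫ ∈ Set.Icc (-ρ * ‖v‖ ^ 2) 0)
    (hτρ : τ * ρ ≤ 2 * ω0 / ω1) {e r : E} {g d : ℕ → E}
    (hd : IsRKCStages s μ ν κ γ τ (A e + r) (fun j => A (e + d j) + g j) d) {G : ℝ} (hG : 0 ≤ G)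
    (hg : ∀ j, 1 ≤ j → j ≤ s - 1 → ‖g j‖ ≤ G) :
    ‖e + d s‖ ≤ ‖e‖ + rkcErrorConst s ω0 b μ * (G + ‖r‖) * τ := by
  have hX := isSymmetric_rkcShift (ω0 := ω0) (ω1 := ω1) (τ := τ) hA
  have hXω := inner_rkcShift_apply_self_mem_Icc hω1 hτ hAρ hτρ
  rw [hd.eq_smul_add_sum hc hs fun j hj => (hb.pos j hj).ne', ← add_assoc]
  exact norm_add_le_of_le
    (norm_add_smul_aeval_T_sub_apply_le hb.one_le hX hXω (hb.pos s le_rfl).le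
      (hb.mul_chebT_le_one s le_rfl) e)
    (norm_sum_smul_aeval_U_apply_le hb.one_le hX hXω hb.pos
      (fun _ hj1 hj => hc.mu_pos hω1 hb.pos hj1 hj) hτ
      (fun _ hj1 hj => norm_rkcForcing_le hb hG hg hj1 hj))

end StabilityBounds

theorem inner_toEuclideanLin_apply_self_mem_Icc {n : Type*} [Fintype n] [DecidableEq n]
    {J : Matrix n n ℝ} (hJ : J.IsHermitian) {l r : ℝ} (h : ∀ i, hJ.eigenvalues i ∈ Set.Icc l r)
    (v : EuclideanSpace ℝ n) :
    ⟪Matrix.toEuclideanLin J v, v⟫ ∈ Set.Icc (l * ‖v‖ ^ 2) (r * ‖v‖ ^ 2) := by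
  refine inner_apply_self_mem_Icc_of_eigenvectors hJ.eigenvectorBasis (fun i => ?_) h v
  ext k
  simpa [Matrix.toLpLin_apply] using congrFun (hJ.mulVec_eigenvectorBasis i) k

theorem mixed_precision_rkc2_error_propagation_second_order_general
    {E : Type*} [NormedAddCommGroup E] [InnerProductSpace ℝ E] {s : ℕ} {ω0 ω1 τ ρ C : ℝ}
    {b μ ν κ γ : ℕ → ℝ} (hc : IsRKCCoeff s ω0 ω1 b μ ν κ γ) (hb : IsStableRKCWeight s ω0 b)
    (hs : 1 ≤ s) (hω1 : 0 < ω1) (hτ : 0 ≤ τ) {f : E → E} (hf : ContDiff ℝ 2 f)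
    (hC : ∀ x, ‖iteratedFDeriv ℝ 2 f x‖ ≤ C) {y y' : E} {A : E →L[ℝ] E} (hfA : HasFDerivAt f A y)
    (hA : A.IsSymmetric) (hAρ : ∀ v, ⟪A v, v⟫ ∈ Set.Icc (-ρ * ‖v‖ ^ 2) 0)
    (hτρ : τ * ρ ≤ 2 * ω0 / ω1) {d d' δ : ℕ → E}
    (hd : IsRKCStages s μ ν κ γ τ (f y) (fun j => f (y + d j)) d)
    (hd' : IsRKCStages s μ ν κ γ τ (f y') (fun j => f y' + δ j) d') {m p q : ℝ} (hm : 0 ≤ m)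
    (hδ : ∀ j, 1 ≤ j → j ≤ s - 1 → ‖δ j - (f (y' + d' j) - f y')‖ ≤ m)
    (hp : ∀ j, 1 ≤ j → j ≤ s - 1 → ‖d' j‖ ≤ p) (hq : ∀ j, 1 ≤ j → j ≤ s - 1 → ‖d j‖ ≤ q) :
    ‖y' + d' s - (y + d s)‖ ≤ ‖y' - y‖ + rkcErrorConst s ω0 b μ *
      (3 / 2 * C * ‖y' - y‖ ^ 2 + m + C * (p ^ 2 + q ^ 2)) * τ := by
  have hC₀ : 0 ≤ C := (norm_nonneg _).trans (hC y)
  have htaylor := norm_taylor_remainder_le_of_norm_iteratedFDeriv_two_le hf hC hfA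
  set r := f y' - f y - A (y' - y)
  set g := fun j => f y' + δ j - f (y + d j) - A (y' - y + (d' j - d j))
  have hr : ‖r‖ ≤ C / 2 * ‖y' - y‖ ^ 2 := by
    simpa only [add_sub_cancel] using htaylor (y' - y)
  have hg (j : ℕ) (hj1 : 1 ≤ j) (hj : j ≤ s - 1) :
      ‖g j‖ ≤ C * ‖y' - y‖ ^ 2 + m + C * (p ^ 2 + q ^ 2) :=
    norm_perturbed_linearization_defect_le hC₀ htaylor (hδ j hj1 hj) (hp j hj1 hj) (hq j hj1 hj)
  have hdiff : IsRKCStages s μ ν κ γ τ (A (y' - y) + r)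
      (fun j => A (y' - y + (d' j - d j)) + g j) (fun j => d' j - d j) := by
    simpa only [r, g, add_sub_cancel] using hd'.sub hd
  have hCs := rkcErrorConst_nonneg hb.one_le hb.pos
    fun _ hj1 hj => hc.mu_pos hω1 hb.pos hj1 hj
  calc
    _ = ‖y' - y + (d' s - d s)‖ := by rw [add_sub_add_comm]
    _ ≤ ‖y' - y‖ + rkcErrorConst s ω0 b μ *
        (C * ‖y' - y‖ ^ 2 + m + C * (p ^ 2 + q ^ 2) + ‖r‖) * τ :=
      hdiff.norm_add_le hc hb hs hω1 hτ hA hAρ hτρ (by positivity) hg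
    _ ≤ ‖y' - y‖ + rkcErrorConst s ω0 b μ *
        (C * ‖y' - y‖ ^ 2 + m + C * (p ^ 2 + q ^ 2) + C / 2 * ‖y' - y‖ ^ 2) * τ := by gcongr
    _ = _ := by ring

/-- error propagation bound for one step of the mixed-precision RKC2 scheme
(second-order-preserving perturbation accuracy `Ĉ Δt²`) versus the exact RKC2 scheme. -/
theorem mixed_precision_rkc2_error_propagation_second_order
    {n : ℕ} (s : ℕ) (hs : 2 ≤ s) (ϑ : ℝ) (hϑ : 0 ≤ ϑ)
    (ω0 ω1 : ℝ) (b μ ν κ γ : ℕ → ℝ)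
    (hω0 : ω0 = 1 + ϑ / (s : ℝ) ^ 2)
    (hω1 : ω1 = deriv (fun x => chebT ℝ s x) ω0 / deriv (deriv (fun x => chebT ℝ s x)) ω0)
    (hb : ∀ j, 2 ≤ j → j ≤ s →
      b j = deriv (deriv (fun x => chebT ℝ j x)) ω0 / (deriv (fun x => chebT ℝ j x) ω0) ^ 2)
    (hb0 : b 0 = b 2) (hb1 : b 1 = b 2)
    (hμ1 : μ 1 = b 1 * ω1)
    (hμ : ∀ j, 2 ≤ j → j ≤ s → μ j = 2 * ω1 * b j / b (j - 1))
    (hν : ∀ j, 2 ≤ j → j ≤ s → ν j = 2 * ω0 * b j / b (j - 1))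
    (hκ : ∀ j, 2 ≤ j → j ≤ s → κ j = -(b j / b (j - 2)))
    (hγ : ∀ j, 2 ≤ j → j ≤ s → γ j = -(μ j * (1 - b (j - 1) * chebT ℝ (j - 1) ω0)))
    (Cs : ℝ) (hCs : Cs = ∑ j ∈ Finset.Icc 1 s, b s / b j * chebU ℝ (s - j) ω0 * μ j)
    (f : EuclideanSpace ℝ (Fin n) → EuclideanSpace ℝ (Fin n))
    (hf : ContDiff ℝ 2 f)
    (Cf'' : ℝ) (hCf'' : ∀ x, ‖iteratedFDeriv ℝ 2 f x‖ ≤ Cf'')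
    (yn yhat : EuclideanSpace ℝ (Fin n)) (Δt : ℝ) (hΔt : 0 < Δt)
    (J : Matrix (Fin n) (Fin n) ℝ) (hJsymm : J.IsHermitian)
    (hJ : HasFDerivAt f ((Matrix.toEuclideanLin J).toContinuousLinearMap) yn)
    (ρ : ℝ) (hρ : 0 ≤ ρ) (heig : ∀ i, hJsymm.eigenvalues i ∈ Set.Icc (-ρ) 0)
    (hstab : Δt * ρ ≤ 2 * ω0 / ω1)
    -- exact RKC2 step
    (d : ℕ → EuclideanSpace ℝ (Fin n))
    (hd0 : d 0 = 0) (hd1 : d 1 = (μ 1 * Δt) • f yn)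
    (hd : ∀ j, 2 ≤ j → j ≤ s →
      d j = ν j • d (j - 1) + κ j • d (j - 2) + (μ j * Δt) • f (yn + d (j - 1))
        + (γ j * Δt) • f yn)
    (yn' : EuclideanSpace ℝ (Fin n)) (hyn' : yn' = yn + d s)
    -- mixed-precision RKC2 step
    (Δf : ℕ → EuclideanSpace ℝ (Fin n))
    (dh : ℕ → EuclideanSpace ℝ (Fin n))
    (hdh0 : dh 0 = 0) (hdh1 : dh 1 = (μ 1 * Δt) • f yhat)
    (hdh : ∀ j, 2 ≤ j → j ≤ s →
      dh j = ν j • dh (j - 1) + κ j • dh (j - 2) + (μ j * Δt) • (f yhat + Δf (j - 1))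
        + (γ j * Δt) • f yhat)
    (yhat' : EuclideanSpace ℝ (Fin n)) (hyhat' : yhat' = yhat + dh s)
    -- assumptions on the perturbations and internal stages
    (Chat CΔ Cd : ℝ) (hChat : 0 ≤ Chat) (hCΔ : 0 ≤ CΔ) (hCd : 0 ≤ Cd)
    (hΔf : ∀ j, 1 ≤ j → j ≤ s - 1 →
      ‖Δf j - (f (yhat + dh j) - f yhat)‖ ≤ min (Chat * Δt ^ 2) (CΔ * ‖yhat‖))
    (hdhb : ∀ j, 1 ≤ j → j ≤ s - 1 →
      ‖dh j‖ ≤ Cd * min (Δt * ‖f yhat‖) ‖yhat‖)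
    (hdb : ∀ j, 1 ≤ j → j ≤ s - 1 →
      ‖d j‖ ≤ Cd * min (Δt * ‖f yn‖) ‖yn‖) :
    ‖yhat' - yn'‖ ≤ ‖yhat - yn‖ + Cf'' * (1 + 2 * Cs) * ‖yhat - yn‖ ^ 2 * Δt
      + Cs * min (Chat * Δt ^ 2) (CΔ * ‖yhat‖) * Δt
      + Cs * Cf'' * Cd ^ 2 *
          ((min (Δt * ‖f yhat‖) ‖yhat‖) ^ 2 + (min (Δt * ‖f yn‖) ‖yn‖) ^ 2) * Δt := by
  have hω0' : 1 ≤ ω0 := hω0 ▸ le_add_of_nonneg_right (by positivity)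
  have hω1' : 0 < ω1 :=
    hω1 ▸ div_pos (deriv_chebT_pos hω0' (by lia)) (deriv_deriv_chebT_pos hω0' hs)
  have hc : IsRKCCoeff s ω0 ω1 b μ ν κ γ := ⟨hμ1, hμ, hν, hκ, hγ⟩
  have hw : IsStableRKCWeight s ω0 b := isStableRKCWeight_rkc2 hω0' hs hb hb0 hb1
  have hJρ (v : EuclideanSpace ℝ (Fin n)) :
      ⟪(Matrix.toEuclideanLin J).toContinuousLinearMap v, v⟫ ∈ Set.Icc (-ρ * ‖v‖ ^ 2) 0 := by
    simpa only [zero_mul] using! inner_toEuclideanLin_apply_self_mem_Icc hJsymm heig v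
  have hgeneral := mixed_precision_rkc2_error_propagation_second_order_general hc hw (by lia) hω1'
    hΔt.le hf hCf'' hJ (Matrix.isSymmetric_toEuclideanLin_iff.mpr hJsymm) hJρ hstab
    ⟨hd0, hd1, hd⟩ ⟨hdh0, hdh1, hdh⟩ (by positivity) hΔf hdhb hdb
  have hCs0 : 0 ≤ Cs :=
    hCs ▸ rkcErrorConst_nonneg hω0' hw.pos fun _ hj1 hj => hc.mu_pos hω1' hw.pos hj1 hj
  have hC : 0 ≤ Cf'' := (norm_nonneg _).trans (hCf'' yn)
  have hslack : 0 ≤ (1 + Cs / 2) * Cf'' * ‖yhat - yn‖ ^ 2 * Δt := by positivity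
  rw [rkcErrorConst, ← hCs] at hgeneral
  subst hyn' hyhat'
  linarith
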